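/- For all sufficiently large n, the number of primitive subsets of {1, 2, …, n} whose size is at most 0.168153·n is strictly less than Q(n)/2, and the number of primitive subsets of {1, 2, …, n} whose size is at least 0.391752·n is strictly less than Q(n)/2. Equivalently, the median ν(n) of the sizes of the primitive subsets of {1, 2, …, n} satisfies 0.168153·n < ν(n) < 0.391752·n for sufficiently large n. -/

import Mathlib

/-!
Let `Z x A = ∑ x ^ |S|` over the primitive subsets `S` of `A`, so that `Q n = Z 1 {1, …, n}`.
By Chernoff's bound, the number of primitive sets with `|S| ≥ δ n` is at most `Z 3 {1, …, n} / 3 ^ (δ n)`,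
and the number with `|S| ≤ δ n` is at most `3 ^ (δ n) * Z (1/3) {1, …, n}` (`log_card_le`). It remains
to bound these generating functions from above and `Q n` from below, up to factors `exp O(1)`.

Upper bound. `Z x` is invariant under dilation (`Z_image`) and submultiplicative on unions
(`Z_union_le`). Writing `k = 2 ^ a * 3 ^ b * m` with `m` coprime to `6`, the classes with fixed `m` give
`Z x {1, …, n} ≤ ∏ Z x {s ∈ stripA, s ≤ n / m} * Z x {s ∈ stripB, s ≤ n / m}`, up to a factor
`(1 + x) ^ (n / 256 + n / 243)` for the multiples of `2 ^ 8` and of `3 ^ 5` (`Z_Icc_le`). A finite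
enumeration bounds the factor of `m` by `2 ^ (step D (n / m) / 50)` for an explicit step function
(`valid_large`, `valid_small`), and a sum of a step function of `n / m` over the `m` coprime to `6` is
linear in `n` up to `O(1)` (`sum_step_approx`).

Lower bound. Two comparable elements of `(n / 4, n]` have ratio `1`, `2` or `3`, so they lie in the
same class; hence primitive subsets of different classes within `(n / 4, n]` can be chosen
independently. For the classes with `n / m < 48` the primitive subsets are enumerated
(`tableQ_valid`), and from the remaining classes arbitrary subsets of `(n / 2, n]` are taken
(`log_Z_one_ge`).

In units of `n * log 2 / 50` and up to `O(1)`, the logarithm of `Q n` is at least `30.605`, while the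
logarithms of the counts of small and of large sets are at most about `29.80` and `30.37`.
-/

/-- A finite set of positive integers is primitive if no element divides another. -/
def IsPrimitive (S : Finset ℕ) : Prop := ∀ a ∈ S, ∀ b ∈ S, a ∣ b → a = b

/-- `Q n` is the number of primitive subsets of `{1, 2, …, n}`. -/
noncomputable def Q (n : ℕ) : ℕ :=
  Nat.card {S : Finset ℕ // S ⊆ Finset.Icc 1 n ∧ IsPrimitive S}

/-! ### Generating functions of primitive sets -/

open Classical in
/-- The primitive subsets of `A`. -/
noncomputable def prims (A : Finset ℕ) : Finset (Finset ℕ) := A.powerset.filter IsPrimitive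

/-- The size generating function `∑ x ^ |S|` over the primitive subsets `S` of `A`. -/
noncomputable def Z (x : ℝ) (A : Finset ℕ) : ℝ := ∑ S ∈ prims A, x ^ S.card

lemma mem_prims {A S : Finset ℕ} : S ∈ prims A ↔ S ⊆ A ∧ IsPrimitive S := by
  simp [prims]

lemma IsPrimitive.mono {S T : Finset ℕ} (h : IsPrimitive T) (hST : S ⊆ T) : IsPrimitive S :=
  fun a ha b hb => h a (hST ha) b (hST hb)

lemma Z_mono {x : ℝ} (hx : 0 ≤ x) {A B : Finset ℕ} (h : A ⊆ B) : Z x A ≤ Z x B := by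
  refine Finset.sum_le_sum_of_subset_of_nonneg ?_ fun _ _ _ => by positivity
  intro S hS
  rw [mem_prims] at *
  exact ⟨hS.1.trans h, hS.2⟩

lemma empty_mem_prims (A : Finset ℕ) : ∅ ∈ prims A := by
  simp [mem_prims, IsPrimitive]

lemma one_le_Z {x : ℝ} (hx : 0 ≤ x) (A : Finset ℕ) : 1 ≤ Z x A := by
  have := Finset.single_le_sum (f := fun S : Finset ℕ => x ^ S.card)
    (fun _ _ => by positivity) (empty_mem_prims A)
  simpa [Z] using this

lemma Z_union_le {x : ℝ} (hx : 0 ≤ x) (A B : Finset ℕ) : Z x (A ∪ B) ≤ Z x A * Z x B := by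
  unfold Z
  rw [Finset.sum_mul_sum, ← Finset.sum_product']
  -- `S` is recovered from the pair `(S ∩ A, S \ A)`, so the sum over `S` embeds in the product.
  have hinj : Set.InjOn (fun S : Finset ℕ => (S ∩ A, S \ A)) (prims (A ∪ B)) := by
    intro S _ T _ h
    simp only [Prod.mk.injEq] at h
    rw [← sup_inf_sdiff S A, ← sup_inf_sdiff T A]
    exact congrArg₂ _ h.1 h.2
  calc ∑ S ∈ prims (A ∪ B), x ^ S.card
      = ∑ S ∈ prims (A ∪ B), x ^ (S ∩ A).card * x ^ (S \ A).card := by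
        refine Finset.sum_congr rfl fun S _ => ?_
        rw [← pow_add, Finset.card_inter_add_card_sdiff]
    _ = ∑ p ∈ (prims (A ∪ B)).image (fun S : Finset ℕ => (S ∩ A, S \ A)),
          x ^ p.1.card * x ^ p.2.card := by
        rw [Finset.sum_image hinj]
    _ ≤ _ := by
        refine Finset.sum_le_sum_of_subset_of_nonneg ?_ fun _ _ _ => by positivity
        intro p hp
        obtain ⟨S, hS, rfl⟩ := Finset.mem_image.1 hp
        rw [mem_prims] at hS
        rw [Finset.mem_product, mem_prims, mem_prims]
        refine ⟨⟨Finset.inter_subset_right, hS.2.mono Finset.inter_subset_left⟩, ?_,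
          hS.2.mono Finset.sdiff_subset⟩
        intro a ha
        rw [Finset.mem_sdiff] at ha
        have := hS.1 ha.1
        simp_all

lemma Z_empty (x : ℝ) : Z x ∅ = 1 := by
  have : prims ∅ = {∅} := by
    ext S
    simp only [mem_prims, Finset.subset_empty, Finset.mem_singleton]
    exact ⟨fun h => h.1, fun h => ⟨h, by simp [h, IsPrimitive]⟩⟩
  simp [Z, this]

lemma Z_biUnion_le {ι : Type*} [DecidableEq ι] {x : ℝ} (hx : 0 ≤ x) (I : Finset ι)
    (f : ι → Finset ℕ) : Z x (I.biUnion f) ≤ ∏ i ∈ I, Z x (f i) := by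
  induction I using Finset.induction_on with
  | empty => simp [Z_empty]
  | insert a I ha ih =>
    rw [Finset.biUnion_insert, Finset.prod_insert ha]
    refine (Z_union_le hx _ _).trans ?_
    gcongr
    exact zero_le_one.trans (one_le_Z hx _)

/-- Primitivity is invariant under dilation. -/
lemma isPrimitive_image {m : ℕ} (hm : 0 < m) (T : Finset ℕ) :
    IsPrimitive (T.image (m * ·)) ↔ IsPrimitive T := by
  simp only [IsPrimitive, Finset.forall_mem_image]
  refine forall₂_congr fun a _ => forall₂_congr fun b _ => ?_
  rw [Nat.mul_dvd_mul_iff_left hm, Nat.mul_right_inj hm.ne']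

lemma Z_image (x : ℝ) {m : ℕ} (hm : 0 < m) (F : Finset ℕ) :
    Z x (F.image (m * ·)) = Z x F := by
  have hinj : Function.Injective (m * · : ℕ → ℕ) := fun a b h => Nat.eq_of_mul_eq_mul_left hm h
  have : prims (F.image (m * ·)) = (prims F).image (Finset.image (m * ·)) := by
    ext S
    simp only [mem_prims, Finset.mem_image, Finset.subset_image_iff]
    constructor
    · rintro ⟨⟨T, hT, rfl⟩, hp⟩
      exact ⟨T, ⟨by simpa using hT, (isPrimitive_image hm T).1 hp⟩, rfl⟩
    · rintro ⟨T, ⟨hT, hp⟩, rfl⟩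
      exact ⟨⟨T, by simpa using hT, rfl⟩, (isPrimitive_image hm T).2 hp⟩
  rw [Z, this, Finset.sum_image (Finset.image_injective hinj).injOn, Z]
  exact Finset.sum_congr rfl fun S _ => by rw [Finset.card_image_of_injective _ hinj]

lemma Z_le_pow {x : ℝ} (hx : 0 ≤ x) (A : Finset ℕ) : Z x A ≤ (1 + x) ^ A.card := by
  have h := Finset.sum_pow_mul_eq_add_pow x 1 A
  simp only [one_pow, mul_one] at h
  rw [add_comm, ← h]
  refine Finset.sum_le_sum_of_subset_of_nonneg (fun S hS => ?_) fun _ _ _ => by positivity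
  exact Finset.mem_powerset.2 (mem_prims.1 hS).1

/-- If no element of `A` is comparable under divisibility with one of `B`, unions of primitive
subsets of `A` and of `B` are primitive. -/
lemma mul_le_Z_union {x : ℝ} (hx : 0 ≤ x) {A B : Finset ℕ}
    (h : ∀ a ∈ A, ∀ b ∈ B, ¬ a ∣ b ∧ ¬ b ∣ a) : Z x A * Z x B ≤ Z x (A ∪ B) := by
  have hd : Disjoint A B := Finset.disjoint_left.2 fun a ha hb => (h a ha a hb).1 dvd_rfl
  unfold Z
  rw [Finset.sum_mul_sum, ← Finset.sum_product']
  have hinj : Set.InjOn (fun p : Finset ℕ × Finset ℕ => p.1 ∪ p.2) (prims A ×ˢ prims B) := by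
    rintro ⟨S, T⟩ h1 ⟨S', T'⟩ h2 he
    simp only [Set.mem_prod, Finset.mem_coe, mem_prims] at h1 h2
    simp only at he
    rw [Finset.disjoint_left] at hd
    have key : ∀ a, (a ∈ S ∨ a ∈ T ↔ a ∈ S' ∨ a ∈ T') := fun a => by
      simpa using Finset.ext_iff.1 he a
    simp only [Prod.mk.injEq]
    constructor <;> ext a
    · have := key a; have := @h1.1.1 a; have := @h1.2.1 a; have := @h2.1.1 a
      have := @h2.2.1 a; have := @hd a; tauto
    · have := key a; have := @h1.1.1 a; have := @h1.2.1 a; have := @h2.1.1 a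
      have := @h2.2.1 a; have := @hd a; tauto
  calc ∑ p ∈ prims A ×ˢ prims B, x ^ p.1.card * x ^ p.2.card
      = ∑ p ∈ prims A ×ˢ prims B, x ^ (p.1 ∪ p.2).card := by
        refine Finset.sum_congr rfl fun p hp => ?_
        rw [Finset.mem_product, mem_prims, mem_prims] at hp
        rw [← pow_add, Finset.card_union_of_disjoint (hd.mono hp.1.1 hp.2.1)]
    _ = ∑ S ∈ (prims A ×ˢ prims B).image (fun p => p.1 ∪ p.2), x ^ S.card := by
        rw [Finset.sum_image (by simpa using hinj)]
    _ ≤ _ := by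
        refine Finset.sum_le_sum_of_subset_of_nonneg ?_ fun _ _ _ => by positivity
        intro S hS
        obtain ⟨⟨S, T⟩, hp, rfl⟩ := Finset.mem_image.1 hS
        simp only [Finset.mem_product, mem_prims] at hp
        obtain ⟨⟨hS, hSp⟩, hT, hTp⟩ := hp
        refine mem_prims.2 ⟨Finset.union_subset_union hS hT, ?_⟩
        intro a ha b hb hab
        rcases Finset.mem_union.1 ha with ha | ha <;> rcases Finset.mem_union.1 hb with hb | hb
        · exact hSp a ha b hb hab
        · exact absurd hab (h a (hS ha) b (hT hb)).1
        · exact absurd hab (h b (hS hb) a (hT ha)).2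
        · exact hTp a ha b hb hab

/-- Weighted count of the primitive subsets `S` of a list `l` none of whose elements is comparable
with an element of `c`: each chosen element has weight `u`, each other one weight `v`.
The two natural-number weights stand for `x = u / v` with denominators cleared. -/
def wt (u v : ℕ) : List ℕ → List ℕ → ℕ
  | [], _ => 1
  | h :: t, c => v * wt u v t c +
      if c.all (fun y => y % h != 0 && h % y != 0) then u * wt u v t (h :: c) else 0

open Classical in
lemma wt_eq_sum {u v : ℕ} (hv : 0 < v) (l : List ℕ) (hl : l.Nodup) (c : List ℕ) :
    (wt u v l c : ℝ) = (v : ℝ) ^ l.length * ∑ S ∈ l.toFinset.powerset,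
      if IsPrimitive S ∧ ∀ s ∈ S, ∀ y ∈ c, ¬ s ∣ y ∧ ¬ y ∣ s then ((u : ℝ) / v) ^ S.card else 0 := by
  induction l generalizing c with
  | nil => simp [wt, IsPrimitive]
  | cons h t ih =>
    rw [List.nodup_cons] at hl
    have hv' : (v : ℝ) ≠ 0 := by positivity
    have hht : h ∉ t.toFinset := by simpa using hl.1
    rw [List.toFinset_cons, Finset.sum_powerset_insert hht, wt, List.length_cons]
    have hb : (c.all (fun y => y % h != 0 && h % y != 0) = true) ↔ ∀ y ∈ c, ¬ h ∣ y ∧ ¬ y ∣ h := by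
      simp [List.all_eq_true, Nat.dvd_iff_mod_eq_zero]
    have hins : ∀ S ∈ t.toFinset.powerset,
        (IsPrimitive (insert h S) ∧ ∀ s ∈ insert h S, ∀ y ∈ c, ¬ s ∣ y ∧ ¬ y ∣ s) ↔
        (∀ y ∈ c, ¬ h ∣ y ∧ ¬ y ∣ h) ∧
          (IsPrimitive S ∧ ∀ s ∈ S, ∀ y ∈ h :: c, ¬ s ∣ y ∧ ¬ y ∣ s) := by
      intro S hS
      have hhS : h ∉ S := fun hh => hht (Finset.mem_powerset.1 hS hh)
      simp only [IsPrimitive, Finset.forall_mem_insert, List.forall_mem_cons]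
      constructor
      · rintro ⟨⟨⟨-, h1⟩, h2⟩, h3, h4⟩
        refine ⟨h3, fun a ha b hb => (h2 a ha).2 b hb, fun s hs => ⟨⟨fun hd => ?_, fun hd => ?_⟩,
          h4 s hs⟩⟩
        · exact hhS ((h2 s hs).1 hd ▸ hs)
        · exact hhS (h1 s hs hd ▸ hs)
      · rintro ⟨h3, h2, h4⟩
        exact ⟨⟨⟨fun _ => trivial, fun s hs hd => absurd hd (h4 s hs).1.2⟩,
          fun s hs => ⟨fun hd => absurd hd (h4 s hs).1.1, h2 s hs⟩⟩, h3, fun s hs => (h4 s hs).2⟩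
    have h2 : (v : ℝ) ^ (t.length + 1) * ∑ S ∈ t.toFinset.powerset,
        (if IsPrimitive (insert h S) ∧ ∀ s ∈ insert h S, ∀ y ∈ c, ¬ s ∣ y ∧ ¬ y ∣ s
          then ((u : ℝ) / v) ^ (insert h S).card else 0)
        = if ∀ y ∈ c, ¬ h ∣ y ∧ ¬ y ∣ h then (u : ℝ) * wt u v t (h :: c) else 0 := by
      rw [ih hl.2]
      split_ifs with hc
      · rw [mul_left_comm, Finset.mul_sum, Finset.mul_sum, Finset.mul_sum]
        refine Finset.sum_congr rfl fun S hS => ?_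
        have hhS : h ∉ S := fun hh => hht (Finset.mem_powerset.1 hS hh)
        rw [if_congr ((hins S hS).trans (and_iff_right hc)) rfl rfl,
          Finset.card_insert_of_notMem hhS]
        split_ifs
        · rw [pow_succ, pow_succ ((u : ℝ) / v)]
          generalize ((u : ℝ) / v) ^ S.card = z
          field_simp
        · simp
      · rw [Finset.sum_eq_zero, mul_zero]
        intro S hS
        rw [if_neg]
        rw [hins S hS]
        tauto
    rw [mul_add, h2, pow_succ, mul_right_comm, ← ih hl.2]
    simp only [hb]
    push_cast
    split_ifs <;> simp [mul_comm]

open Classical in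
lemma wt_eq_Z {u v : ℕ} (hv : 0 < v) (l : List ℕ) (hl : l.Nodup) :
    (wt u v l [] : ℝ) = (v : ℝ) ^ l.length * Z ((u : ℝ) / v) l.toFinset := by
  rw [wt_eq_sum hv l hl, Z, prims, Finset.sum_filter]
  exact congrArg _ (Finset.sum_congr rfl fun S _ => if_congr (by simp) rfl rfl)

/-! ### Sums of step functions over the integers coprime to `6` -/

/-- The integers in `[1, n]` coprime to `6`. -/
def cop (n : ℕ) : Finset ℕ := (Finset.Icc 1 n).filter (Nat.Coprime 6)

lemma coprime_six_iff (k : ℕ) : Nat.Coprime 6 k ↔ k % 6 = 1 ∨ k % 6 = 5 := by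
  rw [Nat.Coprime, Nat.gcd_rec]
  have : k % 6 < 6 := Nat.mod_lt _ (by norm_num)
  interval_cases k % 6 <;> simp

lemma card_cop (n : ℕ) : (cop n).card = (n + 5) / 6 + (n + 1) / 6 := by
  induction n with
  | zero => rfl
  | succ n ih =>
    unfold cop at *
    rw [← Finset.insert_Icc_right_eq_Icc_add_one (by omega), Finset.filter_insert]
    split_ifs with h
    · rw [Finset.card_insert_of_notMem (by simp), ih]
      rw [coprime_six_iff] at h
      omega
    · rw [ih]
      rw [coprime_six_iff] at h
      omega

/-- The step function with a jump of height `d` at `t` for each `(t, d)` in `D`. -/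
def step (D : List (ℕ × ℤ)) (t : ℕ) : ℤ := (D.map fun p => if p.1 ≤ t then p.2 else 0).sum

/-- The mean value of `step D (n / m)` over the `m` coprime to `6`, scaled so that the sum over
`m ≤ n` is `stepSlope D * n + O(1)`. -/
def stepSlope (D : List (ℕ × ℤ)) : ℚ := (D.map fun p => (p.2 : ℚ) / (3 * p.1)).sum

lemma cop_card_approx (n t : ℕ) (ht : 0 < t) :
    |((((cop n).filter (fun m => t ≤ n / m)).card : ℝ)) - n * (1 / (3 * t))| ≤ 2 := by
  have h1 : (cop n).filter (fun m => t ≤ n / m) = cop (n / t) := by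
    ext m
    simp only [cop, Finset.mem_filter, Finset.mem_Icc]
    have : 1 ≤ m → (t ≤ n / m ↔ m ≤ n / t) := fun hm => by
      rw [Nat.le_div_iff_mul_le hm, Nat.le_div_iff_mul_le ht, mul_comm]
    have h2 : n / t ≤ n := Nat.div_le_self _ _
    constructor
    · rintro ⟨⟨⟨a, b⟩, c⟩, d⟩
      exact ⟨⟨a, (this a).1 d⟩, c⟩
    · rintro ⟨⟨a, b⟩, c⟩
      exact ⟨⟨⟨a, b.trans h2⟩, c⟩, (this a).2 b⟩
  rw [h1, card_cop]
  have ht' : (0 : ℝ) < t := by exact_mod_cast ht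
  have e : (n : ℝ) * (1 / (3 * t)) = (n / t : ℝ) / 3 := by field_simp
  have l1 : ((n / t : ℕ) : ℝ) ≤ (n : ℝ) / t := Nat.cast_div_le
  have l2 : (n : ℝ) / t < ((n / t : ℕ) : ℝ) + 1 := by
    rw [div_lt_iff₀ ht']
    exact_mod_cast Nat.lt_div_mul_add ht |>.trans_eq (by ring)
  rw [e]
  generalize n / t = y at *
  have u1 : ((((y + 5) / 6 + (y + 1) / 6 : ℕ)) : ℝ) * 3 ≤ y + 3 := by
    exact_mod_cast (by omega : ((y + 5) / 6 + (y + 1) / 6) * 3 ≤ y + 3)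
  have u2 : (y : ℝ) ≤ ((((y + 5) / 6 + (y + 1) / 6 : ℕ)) : ℝ) * 3 + 4 := by
    exact_mod_cast (by omega : y ≤ ((y + 5) / 6 + (y + 1) / 6) * 3 + 4)
  rw [abs_le]
  constructor <;> linarith

/-- Up to a bounded error, the sum of a step function of `n / m` is linear in `n`. -/
lemma sum_step_approx (D : List (ℕ × ℤ)) (hD : ∀ p ∈ D, 0 < p.1) :
    ∃ C : ℝ, ∀ n : ℕ, |∑ m ∈ cop n, (step D (n / m) : ℝ) - n * (stepSlope D : ℝ)| ≤ C := by
  induction D with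
  | nil => exact ⟨0, fun n => by simp [step, stepSlope]⟩
  | cons p D ih =>
    obtain ⟨C, hC⟩ := ih fun q hq => hD q (List.mem_cons_of_mem _ hq)
    refine ⟨|(p.2 : ℝ)| * 2 + C, fun n => ?_⟩
    have h1 := cop_card_approx n p.1 (hD p List.mem_cons_self)
    have e1 : ∑ m ∈ cop n, (step (p :: D) (n / m) : ℝ)
        = (((cop n).filter (fun m => p.1 ≤ n / m)).card : ℝ) * p.2
          + ∑ m ∈ cop n, (step D (n / m) : ℝ) := by
      rw [← nsmul_eq_mul, ← Finset.sum_const, Finset.sum_filter, ← Finset.sum_add_distrib]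
      refine Finset.sum_congr rfl fun m _ => ?_
      simp only [step, List.map_cons, List.sum_cons]
      push_cast
      rfl
    have e2 : (stepSlope (p :: D) : ℝ) = p.2 * (1 / (3 * p.1)) + stepSlope D := by
      simp only [stepSlope, List.map_cons, List.sum_cons]
      push_cast
      ring
    rw [e1, e2]
    calc _ = |(p.2 : ℝ) * ((((cop n).filter (fun m => p.1 ≤ n / m)).card : ℝ) - n * (1 / (3 * p.1)))
          + (∑ m ∈ cop n, (step D (n / m) : ℝ) - n * (stepSlope D : ℝ))| := by ring_nf
      _ ≤ _ := abs_add_le _ _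
      _ ≤ _ := by
        rw [abs_mul]
        gcongr
        exact hC n

lemma step_mono {D : List (ℕ × ℤ)} (hD : ∀ p ∈ D, 0 ≤ p.2) : Monotone (step D) := by
  intro s t hst
  refine List.sum_le_sum fun p hp => ?_
  have := hD p hp
  split_ifs <;> omega

/-! ### Upper bounds from the multiplicative classes `2 ^ a * 3 ^ b * m` -/

/-- The numbers `2 ^ a * 3 ^ b` with `a < 8` and `b < 3`. The grid of all `2 ^ a * 3 ^ b` with
`a < 8` and `b < 5` is cut into `stripA` and `stripB` so that the primitive subsets of each part
are few enough to enumerate. -/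
def stripA : List ℕ := (List.range 3).flatMap fun b => (List.range 8).map fun a => 2 ^ a * 3 ^ b

/-- The numbers `2 ^ a * 3 ^ b` with `a < 8` and `3 ≤ b < 5`. -/
def stripB : List ℕ :=
  (List.range 2).flatMap fun b => (List.range 8).map fun a => 2 ^ a * 3 ^ (b + 3)

lemma stripA_nodup : stripA.Nodup := by decide +kernel

lemma stripB_nodup : stripB.Nodup := by decide +kernel

/-- Splitting `k = 2 ^ a * 3 ^ b * m` with `m` coprime to `6`: each class `{2 ^ a * 3 ^ b * m}`
contributes at most two factors, and the multiples of `2 ^ 8` or of `3 ^ 5` are bounded trivially. -/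
lemma Z_Icc_le {x : ℝ} (hx : 0 ≤ x) (n : ℕ) :
    Z x (Finset.Icc 1 n) ≤
      (∏ m ∈ cop n, Z x (stripA.filter (· ≤ n / m)).toFinset *
        Z x (stripB.filter (· ≤ n / m)).toFinset) * (1 + x) ^ (n / 256 + n / 243) := by
  set f : ℕ → Finset ℕ := fun m => (stripA.filter (· ≤ n / m)).toFinset.image (m * ·) ∪
    (stripB.filter (· ≤ n / m)).toFinset.image (m * ·) with hf
  set L : Finset ℕ := (Finset.Ioc 0 n).filter (256 ∣ ·) ∪ (Finset.Ioc 0 n).filter (243 ∣ ·) with hL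
  have hsub : Finset.Icc 1 n ⊆ (cop n).biUnion f ∪ L := by
    intro k hk
    rw [Finset.mem_Icc] at hk
    by_cases h256 : 256 ∣ k
    · exact Finset.mem_union_right _ (Finset.mem_union_left _
        (by simp [h256, hk.2]; omega))
    by_cases h243 : 243 ∣ k
    · exact Finset.mem_union_right _ (Finset.mem_union_right _
        (by simp [h243, hk.2]; omega))
    refine Finset.mem_union_left _ ?_
    obtain ⟨a, k', ha, rfl⟩ := Nat.exists_eq_pow_mul_and_not_dvd (n := k) (by omega) 2 (by norm_num)
    have hk' : k' ≠ 0 := by rintro rfl; simp at ha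
    obtain ⟨b, m, hb, rfl⟩ := Nat.exists_eq_pow_mul_and_not_dvd hk' 3 (by norm_num)
    have hm : m ≠ 0 := by rintro rfl; simp at hb
    have ha8 : a < 8 := by
      by_contra h
      exact h256 (Dvd.dvd.mul_right (pow_dvd_pow 2 (not_lt.1 h)) _)
    have hb5 : b < 5 := by
      by_contra h
      exact h243 (Dvd.dvd.mul_left (Dvd.dvd.mul_right (pow_dvd_pow 3 (not_lt.1 h)) _) _)
    have h2m : ¬ 2 ∣ m := fun h => ha (h.mul_left _)
    have hle : 2 ^ a * 3 ^ b ≤ n / m := by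
      rw [Nat.le_div_iff_mul_le (by omega), mul_assoc]
      exact hk.2
    have hmn : m ≤ n := by
      refine le_trans ?_ hk.2
      rw [← mul_assoc]
      exact Nat.le_mul_of_pos_left m (by positivity)
    refine Finset.mem_biUnion.2 ⟨m, ?_, ?_⟩
    · simp only [cop, Finset.mem_filter, Finset.mem_Icc, coprime_six_iff]
      omega
    · rw [← mul_assoc, mul_comm]
      by_cases hb3 : b < 3
      · refine Finset.mem_union_left _ (Finset.mem_image_of_mem _ ?_)
        simp only [List.mem_toFinset, List.mem_filter, decide_eq_true_eq]
        refine ⟨?_, hle⟩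
        simp only [stripA, List.mem_flatMap, List.mem_map, List.mem_range]
        exact ⟨b, hb3, a, ha8, rfl⟩
      · refine Finset.mem_union_right _ (Finset.mem_image_of_mem _ ?_)
        simp only [List.mem_toFinset, List.mem_filter, decide_eq_true_eq]
        refine ⟨?_, hle⟩
        simp only [stripB, List.mem_flatMap, List.mem_map, List.mem_range]
        exact ⟨b - 3, by omega, a, ha8, by rw [Nat.sub_add_cancel (not_lt.1 hb3)]⟩
  have hcard : L.card ≤ n / 256 + n / 243 := by
    refine (Finset.card_union_le _ _).trans ?_
    rw [Nat.Ioc_filter_dvd_card_eq_div, Nat.Ioc_filter_dvd_card_eq_div]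
  have hf' : ∀ m ∈ cop n, Z x (f m) ≤ Z x (stripA.filter (· ≤ n / m)).toFinset *
        Z x (stripB.filter (· ≤ n / m)).toFinset := by
    intro m hm
    have hm0 : 0 < m := by
      simp only [cop, Finset.mem_filter, Finset.mem_Icc] at hm
      omega
    refine (Z_union_le hx _ _).trans_eq ?_
    rw [Z_image x hm0, Z_image x hm0]
  have hZ0 : ∀ A, 0 ≤ Z x A := fun A => zero_le_one.trans (one_le_Z hx A)
  refine (Z_mono hx hsub).trans ((Z_union_le hx _ _).trans ?_)
  refine mul_le_mul ?_ ?_ (hZ0 _) ?_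
  · exact (Z_biUnion_le hx _ _).trans (Finset.prod_le_prod (fun m _ => hZ0 _) hf')
  · exact (Z_le_pow hx _).trans (pow_le_pow_right₀ (by linarith) hcard)
  · exact Finset.prod_nonneg fun m _ => mul_nonneg (hZ0 _) (hZ0 _)

/-- The intervals `[a, b)` cut out by the successive thresholds, the last one being open-ended
(`10369` exceeds every element of the two strips). -/
def rows : ℕ → List ℕ → List (ℕ × ℕ)
  | a, [] => [(a, 10369)]
  | a, b :: l => (a, b) :: rows b l

lemma exists_row (l : List ℕ) (a t : ℕ) (h : a ≤ t) :
    ∃ r ∈ rows a l, r.1 ≤ t ∧ (t < r.2 ∨ r.2 = 10369) := by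
  induction l generalizing a with
  | nil => exact ⟨(a, 10369), by simp [rows], h, Or.inr rfl⟩
  | cons b l ih =>
    by_cases hb : t < b
    · exact ⟨(a, b), by simp [rows], h, Or.inl hb⟩
    · obtain ⟨r, hr, h'⟩ := ih b (not_lt.1 hb)
      exact ⟨r, List.mem_cons_of_mem _ hr, h'⟩

/-- The finite verification that, with `x = u / v`, the generating functions of the initial parts of
the two strips multiply to at most `2 ^ (step D t / 50)` for every `t`. -/
def Valid (u v : ℕ) (D : List (ℕ × ℤ)) : Prop :=
  ∀ r ∈ rows 1 (D.map Prod.fst).tail,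
    (wt u v (stripA.filter (· < r.2)) [] * wt u v (stripB.filter (· < r.2)) []) ^ 50 ≤
      2 ^ (step D r.1).toNat *
        (v ^ ((stripA.filter (· < r.2)).length + (stripB.filter (· < r.2)).length)) ^ 50

instance (u v : ℕ) (D : List (ℕ × ℤ)) : Decidable (Valid u v D) := by
  unfold Valid
  infer_instance

lemma strip_log_le {u v : ℕ} (hv : 0 < v) {D : List (ℕ × ℤ)} (hD : ∀ p ∈ D, 0 ≤ p.2)
    (h : Valid u v D) {t : ℕ} (ht : 1 ≤ t) :
    50 * Real.log (Z ((u : ℝ) / v) (stripA.filter (· ≤ t)).toFinset *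
      Z ((u : ℝ) / v) (stripB.filter (· ≤ t)).toFinset) ≤ step D t * Real.log 2 := by
  have hx : (0 : ℝ) ≤ (u : ℝ) / v := by positivity
  obtain ⟨r, hr, hrt, hr2⟩ := exists_row (D.map Prod.fst).tail 1 t ht
  have key := h r hr
  set x : ℝ := (u : ℝ) / v with hxdef
  have sub : ∀ l : List ℕ, (∀ y ∈ l, y < 10369) →
      Z x (l.filter (· ≤ t)).toFinset ≤ Z x (l.filter (· < r.2)).toFinset := by
    intro l hl
    refine Z_mono hx fun y hy => ?_
    simp only [List.mem_toFinset, List.mem_filter, decide_eq_true_eq] at hy ⊢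
    have := hl y hy.1
    refine ⟨hy.1, ?_⟩
    rcases hr2 with h | h <;> omega
  have hA := sub stripA (by decide +kernel)
  have hB := sub stripB (by decide +kernel)
  have wA := wt_eq_Z (u := u) hv (stripA.filter (· < r.2)) (stripA_nodup.filter _)
  have wB := wt_eq_Z (u := u) hv (stripB.filter (· < r.2)) (stripB_nodup.filter _)
  have key' : ((wt u v (stripA.filter (· < r.2)) [] : ℝ) *
      wt u v (stripB.filter (· < r.2)) []) ^ 50 ≤ 2 ^ (step D r.1).toNat *
        ((v : ℝ) ^ ((stripA.filter (· < r.2)).length + (stripB.filter (· < r.2)).length)) ^ 50 := by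
    exact_mod_cast key
  rw [wA, wB] at key'
  have pA := one_le_Z hx (stripA.filter (· ≤ t)).toFinset
  have pB := one_le_Z hx (stripB.filter (· ≤ t)).toFinset
  have hvp : (0 : ℝ) < ((v : ℝ) ^ ((stripA.filter (· < r.2)).length +
      (stripB.filter (· < r.2)).length)) ^ 50 := by positivity
  have h3 : (Z x (stripA.filter (· < r.2)).toFinset * Z x (stripB.filter (· < r.2)).toFinset) ^ 50 ≤
      (2 : ℝ) ^ (step D r.1).toNat := by
    refine le_of_mul_le_mul_right (le_trans (le_of_eq ?_) key') hvp
    rw [pow_add]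
    ring
  have h4 : (Z x (stripA.filter (· ≤ t)).toFinset * Z x (stripB.filter (· ≤ t)).toFinset) ^ 50 ≤
      (2 : ℝ) ^ (step D r.1).toNat := by
    refine le_trans ?_ h3
    have : 0 ≤ Z x (stripA.filter (· < r.2)).toFinset := by linarith
    gcongr
  have hpos : 0 < (Z x (stripA.filter (· ≤ t)).toFinset * Z x (stripB.filter (· ≤ t)).toFinset) := by
    positivity
  have h5 := Real.log_le_log (by positivity) h4
  rw [Real.log_pow, Real.log_pow] at h5
  refine (by simpa using h5 : _ ≤ _).trans ?_
  gcongr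
  have h0 : step D 0 ≤ step D r.1 := step_mono hD (Nat.zero_le _)
  have h0' : 0 ≤ step D r.1 := List.sum_nonneg fun z hz => by
    obtain ⟨p, hp, rfl⟩ := List.mem_map.1 hz
    have := hD p hp
    split_ifs <;> omega
  have h6 := step_mono hD hrt
  have : ((step D r.1).toNat : ℤ) ≤ step D t := by rw [Int.toNat_of_nonneg h0']; exact h6
  exact_mod_cast this

/-- Chernoff's bound: if `exp y ≤ x ^ |S|` for every `S` in a family `𝒮` of primitive sets, with
`x = u / v`, then `|𝒮| * exp y` is at most the generating function at `x`, which the strips bound. -/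
lemma log_card_le {u v : ℕ} (hu : 0 < u) (hv : 0 < v) {D : List (ℕ × ℤ)} (hD : ∀ p ∈ D, 0 ≤ p.2)
    (h : Valid u v D) (n : ℕ) (𝒮 : Finset (Finset ℕ)) (h𝒮 : 𝒮 ⊆ prims (Finset.Icc 1 n))
    (hne : 𝒮.Nonempty) (y : ℝ)
    (hy : ∀ S ∈ 𝒮, y ≤ S.card * Real.log ((u : ℝ) / v)) :
    50 * (Real.log 𝒮.card + y) ≤ Real.log 2 * ∑ m ∈ cop n, (step D (n / m) : ℝ) +
      50 * (n * (1 / 256 + 1 / 243)) * Real.log (1 + (u : ℝ) / v) := by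
  set x : ℝ := (u : ℝ) / v with hxdef
  have hx : 0 < x := by positivity
  have hc : (0 : ℝ) < 𝒮.card := by exact_mod_cast hne.card_pos
  have h1 : (𝒮.card : ℝ) * Real.exp y ≤ Z x (Finset.Icc 1 n) := by
    calc (𝒮.card : ℝ) * Real.exp y = ∑ S ∈ 𝒮, Real.exp y := by simp
      _ ≤ ∑ S ∈ 𝒮, x ^ S.card := by
        refine Finset.sum_le_sum fun S hS => ?_
        rw [← Real.exp_log (pow_pos hx S.card), Real.log_pow]
        exact Real.exp_le_exp.2 (hy S hS)
      _ ≤ _ := Finset.sum_le_sum_of_subset_of_nonneg h𝒮 fun _ _ _ => by positivity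
  have h2 := Real.log_le_log (by positivity) (h1.trans (Z_Icc_le hx.le n))
  have hpos : ∀ A, 0 < Z x A := fun A => zero_lt_one.trans_le (one_le_Z hx.le A)
  have hpos' : ∀ m ∈ cop n, Z x (stripA.filter (· ≤ n / m)).toFinset *
        Z x (stripB.filter (· ≤ n / m)).toFinset ≠ 0 :=
    fun m _ => (mul_pos (hpos _) (hpos _)).ne'
  rw [Real.log_mul hc.ne' (Real.exp_pos y).ne', Real.log_exp,
    Real.log_mul (Finset.prod_ne_zero_iff.2 hpos') (by positivity), Real.log_pow,
    Real.log_prod hpos'] at h2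
  have h3 : 50 * ∑ m ∈ cop n, Real.log (Z x (stripA.filter (· ≤ n / m)).toFinset *
        Z x (stripB.filter (· ≤ n / m)).toFinset) ≤
      Real.log 2 * ∑ m ∈ cop n, (step D (n / m) : ℝ) := by
    rw [Finset.mul_sum, Finset.mul_sum]
    refine Finset.sum_le_sum fun m hm => ?_
    simp only [cop, Finset.mem_filter, Finset.mem_Icc] at hm
    rw [mul_comm (Real.log 2)]
    exact strip_log_le hv hD h ((Nat.le_div_iff_mul_le (by omega)).2 (by omega))
  have h4 : ((n / 256 + n / 243 : ℕ) : ℝ) ≤ n * (1 / 256 + 1 / 243) := by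
    have e1 : ((n / 256 : ℕ) : ℝ) ≤ (n : ℝ) / 256 := Nat.cast_div_le
    have e2 : ((n / 243 : ℕ) : ℝ) ≤ (n : ℝ) / 243 := Nat.cast_div_le
    push_cast
    linarith
  have h5 : ((n / 256 + n / 243 : ℕ) : ℝ) * Real.log (1 + x) ≤
      n * (1 / 256 + 1 / 243) * Real.log (1 + x) :=
    mul_le_mul_of_nonneg_right h4 (Real.log_nonneg (by linarith))
  linarith

/-- The table for `x = 3`, used for large primitive sets. The thresholds are the places where a strip
acquires a new element; after `144` there is one jump to the value for the complete strips. -/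
def tableLarge : List (ℕ × ℤ) :=
  [(1, 100), (2, 41), (3, 72), (4, 35), (6, 24), (8, 28), (9, 65), (12, 19), (16, 27), (18, 20),
   (24, 14), (27, 100), (32, 25), (36, 9), (48, 11), (54, 40), (64, 22), (72, 6), (81, 72), (96, 8),
   (108, 35), (128, 20), (144, 179)]

/-- The table for `x = 1 / 3`, used for small primitive sets. -/
def tableSmall : List (ℕ × ℤ) :=
  [(1, 21), (2, 16), (3, 17), (4, 14), (6, 12), (8, 12), (9, 15), (12, 10), (16, 11), (18, 10),
   (24, 7), (27, 21), (32, 11), (36, 7), (48, 6), (54, 16), (64, 10), (72, 5), (81, 17), (96, 6),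
   (108, 14), (128, 9), (144, 113)]

lemma valid_large : Valid 3 1 tableLarge := by decide +kernel

lemma valid_small : Valid 1 3 tableSmall := by decide +kernel

/-! ### A lower bound for the number of primitive sets -/

/-- The numbers `2 ^ a * 3 ^ b` below `48`. -/
def smooth : List ℕ := [1, 2, 3, 4, 6, 8, 9, 12, 16, 18, 24, 27, 32, 36]

/-- The elements of `smooth` in `(t / 4, t]`. -/
def quarter (t : ℕ) : List ℕ := smooth.filter fun s => s ≤ t ∧ t < 4 * s

/-- The elements of `smooth` in `(t / 2, t]`. -/
def half (t : ℕ) : List ℕ := smooth.filter fun s => s ≤ t ∧ t < 2 * s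

/-- The table for the lower bound on `Q`: for `t < 48`, the quotient of the number of primitive
subsets of `quarter t` by `2 ^ |half t|` is at least `2 ^ (step tableQ t / 50)`. The last entry
makes the step function vanish from `48` on. -/
def tableQ : List (ℕ × ℤ) :=
  [(2, 29), (3, -13), (4, 13), (6, 21), (8, 8), (9, -13), (12, 5), (16, 8), (18, 21), (27, -13),
   (32, 8), (36, 5), (48, -79)]

lemma tableQ_valid : ∀ t < 48, 0 ≤ step tableQ t ∧
    2 ^ ((step tableQ t).toNat + 50 * (half t).length) ≤ (wt 1 1 (quarter t) []) ^ 50 := by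
  decide +kernel

lemma step_tableQ_of_le {t : ℕ} (ht : 48 ≤ t) : step tableQ t = 0 := by
  have : ∀ p ∈ tableQ, p.1 ≤ 48 := by decide
  unfold step
  rw [List.map_congr_left (g := fun p => p.2) fun p hp => if_pos ((this p hp).trans ht)]
  decide

lemma quarter_log_ge {t : ℕ} (ht : t < 48) :
    ((step tableQ t : ℝ) + 50 * (half t).length) * Real.log 2 ≤
      50 * Real.log (Z 1 (quarter t).toFinset) := by
  obtain ⟨h0, h1⟩ := tableQ_valid t ht
  have hn : (quarter t).Nodup := List.Nodup.filter _ (by decide)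
  have w := wt_eq_Z (u := 1) (v := 1) one_pos _ hn
  simp only [Nat.cast_one, one_pow, one_mul, div_one] at w
  have h2 : (2 : ℝ) ^ ((step tableQ t).toNat + 50 * (half t).length) ≤
      (wt 1 1 (quarter t) [] : ℝ) ^ 50 := by exact_mod_cast h1
  rw [w] at h2
  have h3 := Real.log_le_log (by positivity) h2
  rw [Real.log_pow, Real.log_pow] at h3
  have e : ((step tableQ t).toNat : ℝ) = step tableQ t := by
    exact_mod_cast Int.toNat_of_nonneg h0
  push_cast at h3
  rwa [e] at h3

/-- The elements of `(n / 4, n]` of the form `m * s` with `s` in `smooth`. When `n / m < 48` these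
are all the elements of `(n / 4, n]` of the form `2 ^ a * 3 ^ b * m`. -/
def block (n m : ℕ) : Finset ℕ := (quarter (n / m)).toFinset.image (m * ·)

lemma mem_block {n m k : ℕ} (hm : 0 < m) :
    k ∈ block n m ↔ ∃ s ∈ smooth, m * s = k ∧ k ≤ n ∧ n < 4 * k := by
  simp only [block, quarter, Finset.mem_image, List.mem_toFinset, List.mem_filter,
    decide_eq_true_eq, Nat.le_div_iff_mul_le hm, Nat.div_lt_iff_lt_mul hm]
  constructor
  · rintro ⟨s, ⟨hs, h1, h2⟩, rfl⟩
    exact ⟨s, hs, rfl, by linarith, by linarith⟩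
  · rintro ⟨s, hs, rfl, h1, h2⟩
    exact ⟨s, ⟨hs, by linarith, by linarith⟩, rfl⟩

/-- A proper divisibility inside `(n / 4, n]` has quotient `2` or `3`, hence stays in one block. -/
lemma block_cross {n m m' a b : ℕ} (hm0 : 0 < m) (hm0' : 0 < m') (hm : Nat.Coprime 6 m)
    (hm' : Nat.Coprime 6 m') (hne : m ≠ m') (ha : a ∈ block n m) (hb : b ∈ block n m') :
    ¬ a ∣ b := by
  rintro ⟨j, rfl⟩
  obtain ⟨s, hs, rfl, h1, h2⟩ := (mem_block hm0).1 ha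
  obtain ⟨s', hs', h3, h4, h5⟩ := (mem_block hm0').1 hb
  have hsm : ∀ s ∈ smooth, s ∣ 6 ^ 5 := by decide
  have hj : j < 4 := by
    by_contra hj
    nlinarith
  have hj0 : j ≠ 0 := by rintro rfl; omega
  have hj6 : j ∣ 6 := by interval_cases j <;> omega
  have c1 : Nat.Coprime m s' := (hm.symm.pow_right 5).coprime_dvd_right (hsm s' hs')
  have c2 : Nat.Coprime m' (s * j) :=
    ((hm'.symm.pow_right 6).coprime_dvd_right (mul_dvd_mul (hsm s hs) hj6))
  refine hne (Nat.dvd_antisymm ?_ ?_)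
  · refine c1.dvd_of_dvd_mul_right (n := s') ?_
    rw [h3, mul_assoc]
    exact dvd_mul_right _ _
  · refine c2.dvd_of_dvd_mul_right (n := s * j) ?_
    rw [← mul_assoc, ← h3]
    exact dvd_mul_right _ _

lemma Z_one_of_antichain {A : Finset ℕ} (h : IsPrimitive A) : Z 1 A = 2 ^ A.card := by
  have : prims A = A.powerset := by
    ext S
    rw [mem_prims, Finset.mem_powerset]
    exact ⟨fun h => h.1, fun hS => ⟨hS, h.mono hS⟩⟩
  simp [Z, this]

/-- `50 log₂ Q(n) ≥ 25 n + ∑ step tableQ (n / m)`: the blocks with `n / m < 48` and the elements of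
`(n / 2, n]` outside them contribute independently, and the `n / 2` elements of `(n / 2, n]` give
the term `25 n`. -/
lemma log_Z_one_ge (n : ℕ) :
    Real.log 2 * (25 * n + ∑ m ∈ cop n, (step tableQ (n / m) : ℝ)) ≤
      50 * Real.log (Z 1 (Finset.Icc 1 n)) := by
  set M : Finset ℕ := (cop n).filter (fun m => n / m < 48) with hM
  have hMm : ∀ m ∈ M, 0 < m ∧ Nat.Coprime 6 m ∧ n / m < 48 := by
    intro m hm
    simp only [hM, cop, Finset.mem_filter, Finset.mem_Icc] at hm
    exact ⟨hm.1.1.1, hm.1.2, hm.2⟩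
  set R : Finset ℕ := Finset.Ioc (n / 2) n \ M.biUnion (block n) with hR
  have hRm : ∀ a ∈ R, n < 2 * a ∧ a ≤ n ∧ ∀ m ∈ M, a ∉ block n m := by
    intro a ha
    simp only [hR, Finset.mem_sdiff, Finset.mem_Ioc, Finset.mem_biUnion, not_exists, not_and] at ha
    exact ⟨by omega, ha.1.2, ha.2⟩
  have hRprim : IsPrimitive R := by
    rintro a ha b hb ⟨j, rfl⟩
    have h1 := hRm a ha
    have h2 := hRm _ hb
    have : j < 2 := by
      by_contra hj
      nlinarith
    have : j ≠ 0 := by rintro rfl; omega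
    obtain rfl : j = 1 := by omega
    simp
  -- Elements of `R` lie above `n / 2`, and any multiple up to `n` of an element of a block lies in
  -- the same block.
  have hRB : ∀ a ∈ R, ∀ m ∈ M, ∀ b ∈ block n m, ¬ a ∣ b ∧ ¬ b ∣ a := by
    intro a ha m hm b hb
    obtain ⟨h1, h2, h3⟩ := hRm a ha
    obtain ⟨hm0, hm6, hm48⟩ := hMm m hm
    obtain ⟨s, hs, rfl, h4, h5⟩ := (mem_block hm0).1 hb
    constructor
    · rintro ⟨j, hj⟩
      have : j < 2 := by
        by_contra hj
        nlinarith
      have : j ≠ 0 := by rintro rfl; omega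
      obtain rfl : j = 1 := by omega
      exact h3 m hm (by rwa [hj, mul_one] at hb)
    · rintro ⟨j, rfl⟩
      have hj : j < 4 := by
        by_contra hj
        nlinarith
      have hj0 : j ≠ 0 := by rintro rfl; omega
      refine h3 m hm ((mem_block hm0).2 ⟨s * j, ?_, by ring, h2, by omega⟩)
      have hcl : ∀ s ∈ smooth, ∀ j < 4, j ≠ 0 → s * j < 48 → s * j ∈ smooth := by decide
      refine hcl s hs j hj hj0 (lt_of_le_of_lt ?_ hm48)
      rw [Nat.le_div_iff_mul_le hm0]
      linarith
  have hprod : ∀ I ⊆ M, Z 1 R * ∏ m ∈ I, Z 1 (block n m) ≤ Z 1 (R ∪ I.biUnion (block n)) := by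
    intro I
    induction I using Finset.induction_on with
    | empty => simp
    | insert m I hmI ih =>
      intro hI
      rw [Finset.insert_subset_iff] at hI
      have h0 : (0 : ℝ) ≤ Z 1 (block n m) := zero_le_one.trans (one_le_Z zero_le_one _)
      rw [Finset.prod_insert hmI, Finset.biUnion_insert, Finset.union_comm (block n m),
        ← Finset.union_assoc, mul_left_comm, mul_comm]
      refine (mul_le_mul_of_nonneg_right (ih hI.2) h0).trans (mul_le_Z_union zero_le_one ?_)
      intro a ha b hb
      rcases Finset.mem_union.1 ha with ha | ha
      · exact hRB a ha m hI.1 b hb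
      · obtain ⟨m', hm', ha⟩ := Finset.mem_biUnion.1 ha
        obtain ⟨p1, p2, -⟩ := hMm m hI.1
        obtain ⟨q1, q2, -⟩ := hMm m' (hI.2 hm')
        have hne : m' ≠ m := fun h => hmI (h ▸ hm')
        exact ⟨block_cross q1 p1 q2 p2 hne ha hb, block_cross p1 q1 p2 q2 hne.symm hb ha⟩
  have hsub : R ∪ M.biUnion (block n) ⊆ Finset.Icc 1 n := by
    intro k hk
    rw [Finset.mem_Icc]
    rcases Finset.mem_union.1 hk with hk | hk
    · have := hRm k hk
      omega
    · obtain ⟨m, hm, hk⟩ := Finset.mem_biUnion.1 hk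
      obtain ⟨s, -, -, h1, h2⟩ := (mem_block (hMm m hm).1).1 hk
      omega
  have hcard : n ≤ 2 * (R.card + ∑ m ∈ M, (half (n / m)).length) := by
    have hcov : Finset.Ioc (n / 2) n ⊆
        R ∪ M.biUnion (fun m => (half (n / m)).toFinset.image (m * ·)) := by
      intro k hk
      by_cases hkR : k ∈ R
      · exact Finset.mem_union_left _ hkR
      refine Finset.mem_union_right _ ?_
      have hk' : k ∈ M.biUnion (block n) := by
        by_contra h
        exact hkR (Finset.mem_sdiff.2 ⟨hk, h⟩)
      obtain ⟨m, hm, hkm⟩ := Finset.mem_biUnion.1 hk'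
      have hm0 := (hMm m hm).1
      obtain ⟨s, hs, rfl, h1, h2⟩ := (mem_block hm0).1 hkm
      rw [Finset.mem_Ioc] at hk
      refine Finset.mem_biUnion.2 ⟨m, hm, Finset.mem_image_of_mem _ ?_⟩
      simp only [half, List.mem_toFinset, List.mem_filter, decide_eq_true_eq,
        Nat.le_div_iff_mul_le hm0, Nat.div_lt_iff_lt_mul hm0]
      refine ⟨hs, by linarith, ?_⟩
      have : n < 2 * (m * s) := by omega
      linarith
    have h1 := (Finset.card_le_card hcov).trans (Finset.card_union_le _ _)
    have h2 : (M.biUnion (fun m => (half (n / m)).toFinset.image (m * ·))).card ≤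
        ∑ m ∈ M, (half (n / m)).length :=
      Finset.card_biUnion_le.trans (Finset.sum_le_sum fun m _ =>
        Finset.card_image_le.trans (List.toFinset_card_le _))
    rw [Nat.card_Ioc] at h1
    omega
  have hmain := (hprod M le_rfl).trans (Z_mono zero_le_one hsub)
  have hpos : ∀ A, 0 < Z 1 A := fun A => zero_lt_one.trans_le (one_le_Z zero_le_one A)
  have hlog := Real.log_le_log
    (mul_pos (hpos R) (Finset.prod_pos fun m _ => hpos (block n m))) hmain
  rw [Real.log_mul (hpos R).ne' (Finset.prod_ne_zero_iff.2 fun m _ => (hpos _).ne'),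
    Real.log_prod fun m _ => (hpos _).ne', Z_one_of_antichain hRprim, Real.log_pow] at hlog
  have hsum : ∑ m ∈ M, ((step tableQ (n / m) : ℝ) + 50 * (half (n / m)).length) * Real.log 2 ≤
      50 * ∑ m ∈ M, Real.log (Z 1 (block n m)) := by
    rw [Finset.mul_sum]
    refine Finset.sum_le_sum fun m hm => ?_
    rw [block, Z_image 1 (hMm m hm).1]
    exact quarter_log_ge (hMm m hm).2.2
  rw [← Finset.sum_mul, Finset.sum_add_distrib, ← Finset.mul_sum] at hsum
  have hstep : ∑ m ∈ cop n, (step tableQ (n / m) : ℝ) = ∑ m ∈ M, (step tableQ (n / m) : ℝ) := by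
    rw [hM, Finset.sum_filter]
    refine Finset.sum_congr rfl fun m _ => ?_
    split_ifs with h
    · rfl
    · rw [step_tableQ_of_le (not_lt.1 h), Int.cast_zero]
  rw [hstep]
  have hcard' : (n : ℝ) ≤ 2 * (R.card + ∑ m ∈ M, ((half (n / m)).length : ℝ)) := by
    exact_mod_cast hcard
  have h2 := mul_le_mul_of_nonneg_left hcard' (Real.log_nonneg one_le_two)
  linarith

/-! ### Comparison of the bounds -/

lemma Q_eq (n : ℕ) : (Q n : ℝ) = Z 1 (Finset.Icc 1 n) := by
  have : {S : Finset ℕ | S ⊆ Finset.Icc 1 n ∧ IsPrimitive S} = prims (Finset.Icc 1 n) := by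
    ext S
    simp [mem_prims]
  have h : Q n = (prims (Finset.Icc 1 n)).card := by
    rw [Q, ← Set.ncard_coe_finset, ← this]
    rfl
  simp [Z, h]

lemma log_three_ge : 1.584 * Real.log 2 ≤ Real.log 3 := by
  have h := Real.log_le_log (by norm_num) (by norm_num : (2 : ℝ) ^ 198 ≤ 3 ^ 125)
  rw [Real.log_pow, Real.log_pow] at h
  push_cast at h
  linarith

lemma log_three_le : Real.log 3 ≤ 1.5851 * Real.log 2 := by
  have h := Real.log_le_log (by norm_num) (by norm_num : (3 : ℝ) ^ 147 ≤ 2 ^ 233)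
  rw [Real.log_pow, Real.log_pow] at h
  push_cast at h
  linarith [Real.log_pos one_lt_two]

open Classical in
lemma natCard_eq (n : ℕ) (p : Finset ℕ → Prop) :
    Nat.card {S : Finset ℕ // S ⊆ Finset.Icc 1 n ∧ IsPrimitive S ∧ p S} =
      ((prims (Finset.Icc 1 n)).filter p).card := by
  rw [← Set.ncard_coe_finset]
  have : {S : Finset ℕ | S ⊆ Finset.Icc 1 n ∧ IsPrimitive S ∧ p S} =
      ((prims (Finset.Icc 1 n)).filter p : Finset (Finset ℕ)) := by
    ext S
    simp [mem_prims, and_assoc]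
  rw [← this]
  rfl

lemma lt_half_of_log {c q : ℝ} (hq : 0 < q) (h : 0 < c → Real.log c + Real.log 2 < Real.log q) :
    c < q / 2 := by
  by_cases hc : 0 < c
  · have h1 := h hc
    rw [← Real.log_mul hc.ne' two_ne_zero] at h1
    have := (Real.log_lt_log_iff (by positivity) hq).1 h1
    linarith
  · linarith

/-- Bounds on the median size of a primitive subset of `{1, …, n}`: for large `n`,
fewer than half of the primitive subsets have size at most `0.168153 n`, and fewer
than half have size at least `0.391752 n`. -/
theorem median_primitive_subset_size_bounds :
    ∃ N : ℕ, ∀ n : ℕ, N ≤ n →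
      ((Nat.card {S : Finset ℕ // S ⊆ Finset.Icc 1 n ∧ IsPrimitive S ∧
          (S.card : ℝ) ≤ 0.168153 * n} : ℝ) < (Q n : ℝ) / 2) ∧
      ((Nat.card {S : Finset ℕ // S ⊆ Finset.Icc 1 n ∧ IsPrimitive S ∧
          0.391752 * (n : ℝ) ≤ (S.card : ℝ)} : ℝ) < (Q n : ℝ) / 2) := by
  classical
  obtain ⟨C₁, hC₁⟩ := sum_step_approx tableSmall (by decide)
  obtain ⟨C₂, hC₂⟩ := sum_step_approx tableLarge (by decide)
  obtain ⟨C₃, hC₃⟩ := sum_step_approx tableQ (by decide)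
  have s₁ : (stepSlope tableSmall : ℝ) ≤ 16.308 := by norm_num [stepSlope, tableSmall]
  have s₂ : (stepSlope tableLarge : ℝ) ≤ 60.589 := by norm_num [stepSlope, tableLarge]
  have s₃ : 5.605 ≤ (stepSlope tableQ : ℝ) := by norm_num [stepSlope, tableQ]
  obtain ⟨N, hN⟩ := exists_nat_gt (5 * (|C₁| + |C₂| + |C₃| + 50))
  refine ⟨N, fun n hn => ?_⟩
  have hl2 : 0 < Real.log 2 := Real.log_pos one_lt_two
  have hl3 := log_three_ge
  have hl3' := log_three_le
  have hn0 : (0 : ℝ) ≤ n := Nat.cast_nonneg n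
  have hnN : 5 * (|C₁| + |C₂| + |C₃| + 50) < n := hN.trans_le (by exact_mod_cast hn)
  have hX : 5 * (|C₁| + |C₂| + |C₃| + 50) * Real.log 2 < n * Real.log 2 :=
    mul_lt_mul_of_pos_right hnN hl2
  have hY := mul_le_mul_of_nonneg_left hl3 hn0
  have hY' := mul_le_mul_of_nonneg_left hl3' hn0
  have b₁ : Real.log 2 * ∑ m ∈ cop n, (step tableSmall (n / m) : ℝ) ≤
      Real.log 2 * (n * 16.308 + |C₁|) := by
    have h1 := (abs_le.1 (hC₁ n)).2
    have h2 := mul_le_mul_of_nonneg_left s₁ hn0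
    exact mul_le_mul_of_nonneg_left (by linarith [le_abs_self C₁]) hl2.le
  have b₂ : Real.log 2 * ∑ m ∈ cop n, (step tableLarge (n / m) : ℝ) ≤
      Real.log 2 * (n * 60.589 + |C₂|) := by
    have h1 := (abs_le.1 (hC₂ n)).2
    have h2 := mul_le_mul_of_nonneg_left s₂ hn0
    exact mul_le_mul_of_nonneg_left (by linarith [le_abs_self C₂]) hl2.le
  have b₃ : Real.log 2 * (n * 30.605 - |C₃|) ≤ 50 * Real.log (Z 1 (Finset.Icc 1 n)) := by
    have h1 := (abs_le.1 (hC₃ n)).1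
    have h2 := mul_le_mul_of_nonneg_left s₃ hn0
    refine (mul_le_mul_of_nonneg_left ?_ hl2.le).trans (log_Z_one_ge n)
    linarith [le_abs_self C₃]
  have hQ : 0 < Z 1 (Finset.Icc 1 n) := zero_lt_one.trans_le (one_le_Z zero_le_one _)
  have p₁ := mul_nonneg (abs_nonneg C₁) hl2.le
  have p₂ := mul_nonneg (abs_nonneg C₂) hl2.le
  have p₃ := mul_nonneg (abs_nonneg C₃) hl2.le
  rw [Q_eq, natCard_eq n fun S => (S.card : ℝ) ≤ 0.168153 * n,
    natCard_eq n fun S => 0.391752 * (n : ℝ) ≤ (S.card : ℝ)]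
  constructor
  · refine lt_half_of_log hQ fun hc => ?_
    have key := log_card_le one_pos three_pos (by decide) valid_small n _ (Finset.filter_subset _ _)
      (Finset.card_pos.1 (by exact_mod_cast hc)) (-(0.168153 * n * Real.log 3)) ?_
    · have e : Real.log (1 + ((1 : ℕ) : ℝ) / ((3 : ℕ) : ℝ)) = 2 * Real.log 2 - Real.log 3 := by
        rw [show (1 + ((1 : ℕ) : ℝ) / ((3 : ℕ) : ℝ)) = 2 ^ 2 / 3 by norm_num,
          Real.log_div (by norm_num) (by norm_num), Real.log_pow]
        norm_num
      rw [e] at key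
      linarith
    · intro S hS
      have hS2 := (Finset.mem_filter.1 hS).2
      rw [Nat.cast_one, one_div, Real.log_inv]
      have := mul_le_mul_of_nonneg_right hS2 (Real.log_nonneg (by norm_num : (1 : ℝ) ≤ 3))
      push_cast
      linarith
  · refine lt_half_of_log hQ fun hc => ?_
    have key := log_card_le three_pos one_pos (by decide) valid_large n _ (Finset.filter_subset _ _)
      (Finset.card_pos.1 (by exact_mod_cast hc)) (0.391752 * n * Real.log 3) ?_
    · have e : Real.log (1 + ((3 : ℕ) : ℝ) / ((1 : ℕ) : ℝ)) = 2 * Real.log 2 := by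
        rw [show (1 + ((3 : ℕ) : ℝ) / ((1 : ℕ) : ℝ)) = 2 ^ 2 by norm_num, Real.log_pow]
        norm_num
      rw [e] at key
      linarith
    · intro S hS
      have hS2 := (Finset.mem_filter.1 hS).2
      rw [Nat.cast_one, div_one]
      have := mul_le_mul_of_nonneg_right hS2 (Real.log_nonneg (by norm_num : (1 : ℝ) ≤ 3))
      push_cast
      linarith
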